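/- arXiv:1306.3340 — 5 statements merged into one kernel-verified Lean document; each statement's English description precedes it below -/
import Mathlib

section
/- Let G be an ℓ-group, let I₁, …, Iₙ be finitely many ℓ-ideals of G, and let g₁, …, gₙ ∈ G be such that gᵢ - gⱼ ∈ Iᵢ ∨ Iⱼ for all i, j ∈ {1, …, n}. Then there exists g ∈ G such that g - gᵢ ∈ Iᵢ for each i ∈ {1, …, n}. (Keimel's Chinese Remainder Theorem for ℓ-groups.) -/
/-- An ℓ-ideal of an ℓ-group `G`: an additive subgroup `I` such that `g ∈ I`
whenever `|g| ≤ |h|` for some `h ∈ I`. -/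
def IsLIdeal {G : Type*} [Lattice G] [AddCommGroup G]
    [CovariantClass G G (· + ·) (· ≤ ·)] (I : AddSubgroup G) : Prop :=
  ∀ ⦃g h : G⦄, h ∈ I → |g| ≤ |h| → g ∈ I

/-- The ℓ-ideal generated by a subset `S` of `G`: the smallest ℓ-ideal containing `S`. -/
def lIdealGen {G : Type*} [Lattice G] [AddCommGroup G]
    [CovariantClass G G (· + ·) (· ≤ ·)] (S : Set G) : AddSubgroup G :=
  sInf {I : AddSubgroup G | IsLIdeal I ∧ S ⊆ ↑I}

/-- A prime ℓ-ideal: a proper ℓ-ideal `p` such that `a ⊓ b = 0` implies `a ∈ p` or `b ∈ p`. -/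
def IsPrimeLIdeal {G : Type*} [Lattice G] [AddCommGroup G]
    [CovariantClass G G (· + ·) (· ≤ ·)] (p : AddSubgroup G) : Prop :=
  IsLIdeal p ∧ p ≠ ⊤ ∧ ∀ a b : G, a ⊓ b = 0 → a ∈ p ∨ b ∈ p

/-- A maximal ℓ-ideal: a proper ℓ-ideal maximal under inclusion among proper ℓ-ideals. -/
def IsMaximalLIdeal {G : Type*} [Lattice G] [AddCommGroup G]
    [CovariantClass G G (· + ·) (· ≤ ·)] (m : AddSubgroup G) : Prop :=
  IsLIdeal m ∧ m ≠ ⊤ ∧ ∀ I : AddSubgroup G, IsLIdeal I → I ≠ ⊤ → m ≤ I → I = m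

/-- A (strong order) unit of `G`. -/
def IsStrongUnit {G : Type*} [Lattice G] [AddCommGroup G]
    [CovariantClass G G (· + ·) (· ≤ ·)] (u : G) : Prop :=
  0 ≤ u ∧ ∀ g : G, ∃ n : ℕ, g ≤ n • u

/-- `G` is strongly semisimple: for every `h ∈ G`, the intersection of all maximal
ℓ-ideals containing `h` equals the principal ℓ-ideal generated by `h`. -/
def IsStronglySemisimple (G : Type*) [Lattice G] [AddCommGroup G]
    [CovariantClass G G (· + ·) (· ≤ ·)] : Prop :=
  ∀ h : G, sInf {m : AddSubgroup G | IsMaximalLIdeal m ∧ h ∈ m} = lIdealGen {h}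

/-!
A finite Chinese remainder theorem holds for any subgroups `I i` of an abelian group that satisfy
`I i ⊔ ⨅ j ∈ s, I j = ⨅ j ∈ s, (I i ⊔ I j)`: if `x` solves the congruences indexed by `s`, then
`x - g i` lies in every `I i ⊔ I j`, hence splits as `y + z` with `y ∈ I i` and `z` in all the
`I j`, and `x - z` solves one congruence more. The ℓ-ideals satisfy this distributive law because
the bounds `|x| ≤ a + b` and `|x| ≤ c + d` with nonnegative entries combine to
`|x| ≤ (a + c) + b ⊓ d`, and Riesz decomposition turns such a bound back into membership in a sum.
-/

theorem exists_forall_sub_mem_of_sup_biInf {ι G : Type*} [AddCommGroup G] {I : ι → AddSubgroup G}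
    (hdistrib : ∀ i (s : Finset ι), I i ⊔ ⨅ j ∈ s, I j = ⨅ j ∈ s, (I i ⊔ I j))
    {g : ι → G} (hg : ∀ i j, g i - g j ∈ I i ⊔ I j) (s : Finset ι) :
    ∃ x, ∀ i ∈ s, x - g i ∈ I i := by
  classical
  induction s using Finset.induction_on with
  | empty => exact ⟨0, by simp⟩
  | insert i s _ ih =>
    obtain ⟨x, hx⟩ := ih
    have hsup : ∀ j ∈ s, x - g i ∈ I i ⊔ I j := fun j hj ↦ by
      rw [← sub_sub_sub_cancel_right x (g i) (g j)]
      exact sub_mem (AddSubgroup.mem_sup_right (hx j hj)) (hg i j)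
    have hmem : x - g i ∈ I i ⊔ ⨅ j ∈ s, I j := by
      simpa only [hdistrib, AddSubgroup.mem_iInf] using hsup
    obtain ⟨y, hy, z, hz, hyz⟩ := AddSubgroup.mem_sup.mp hmem
    simp only [AddSubgroup.mem_iInf] at hz
    refine ⟨x - z, (Finset.forall_mem_insert _ _ _).mpr ⟨?_, fun j hj ↦ ?_⟩⟩
    · rwa [sub_right_comm, ← hyz, add_sub_cancel_right]
    · rw [sub_right_comm]
      exact sub_mem (hx j hj) (hz j hj)

section LatticeOrderedGroup

variable {G : Type*} [Lattice G] [AddCommGroup G] [AddLeftMono G]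

theorem exists_add_eq_of_abs_le_add {x a b : G} (ha : 0 ≤ a) (hb : 0 ≤ b) (hx : |x| ≤ a + b) :
    ∃ y z, y + z = x ∧ |y| ≤ a ∧ |z| ≤ b := by
  obtain ⟨hxab, hnegx⟩ := abs_le'.mp hx
  have hneg : -a ≤ a := (neg_nonpos.mpr ha).trans ha
  -- Truncate `x` to the interval `[-a, a]`.
  refine ⟨x ⊓ a ⊔ -a, x - (x ⊓ a ⊔ -a), add_sub_cancel _ _, abs_le'.mpr ⟨?_, ?_⟩,
    abs_le'.mpr ⟨?_, ?_⟩⟩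
  · exact sup_le inf_le_right hneg
  · exact neg_le.mp le_sup_right
  · rw [sub_le_comm]
    exact (le_inf (sub_le_self x hb) (sub_le_iff_le_add.mpr hxab)).trans le_sup_left
  · rw [neg_sub, sub_le_iff_le_add']
    refine sup_le (inf_le_left.trans (le_add_of_nonneg_right hb)) ?_
    rwa [← sub_le_iff_le_add', neg_sub_comm, sub_le_iff_le_add']

namespace IsLIdeal

variable {I J K : AddSubgroup G}

theorem mem_of_abs_le (hI : IsLIdeal I) {x a : G} (ha : a ∈ I) (hxa : |x| ≤ a) : x ∈ I :=
  hI ha (hxa.trans (le_abs_self a))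

theorem abs_mem (hI : IsLIdeal I) {x : G} (hx : x ∈ I) : |x| ∈ I :=
  hI hx (abs_abs x).le

theorem mem_sup_iff (hI : IsLIdeal I) (hJ : IsLIdeal J) {x : G} :
    x ∈ I ⊔ J ↔ ∃ a ∈ I, ∃ b ∈ J, 0 ≤ a ∧ 0 ≤ b ∧ |x| ≤ a + b := by
  constructor
  · intro hx
    obtain ⟨u, hu, v, hv, rfl⟩ := AddSubgroup.mem_sup.mp hx
    exact ⟨|u|, hI.abs_mem hu, |v|, hJ.abs_mem hv, abs_nonneg u, abs_nonneg v, abs_add_le u v⟩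
  · rintro ⟨a, ha, b, hb, ha₀, hb₀, hx⟩
    obtain ⟨y, z, rfl, hy, hz⟩ := exists_add_eq_of_abs_le_add ha₀ hb₀ hx
    exact AddSubgroup.add_mem_sup (hI.mem_of_abs_le ha hy) (hJ.mem_of_abs_le hb hz)

theorem sup (hI : IsLIdeal I) (hJ : IsLIdeal J) : IsLIdeal (I ⊔ J) := by
  intro x y hy hxy
  obtain ⟨a, ha, b, hb, ha₀, hb₀, hyab⟩ := (hI.mem_sup_iff hJ).mp hy
  exact (hI.mem_sup_iff hJ).mpr ⟨a, ha, b, hb, ha₀, hb₀, hxy.trans hyab⟩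

theorem iInf {ι : Sort*} {I : ι → AddSubgroup G} (hI : ∀ i, IsLIdeal (I i)) :
    IsLIdeal (⨅ i, I i) := by
  intro x y hy hxy
  rw [AddSubgroup.mem_iInf] at hy ⊢
  exact fun i ↦ hI i (hy i) hxy

theorem inf (hI : IsLIdeal I) (hJ : IsLIdeal J) : IsLIdeal (I ⊓ J) :=
  fun _ _ hy hxy ↦ ⟨hI hy.1 hxy, hJ hy.2 hxy⟩

theorem sup_inf_left (hI : IsLIdeal I) (hJ : IsLIdeal J) (hK : IsLIdeal K) :
    I ⊔ J ⊓ K = (I ⊔ J) ⊓ (I ⊔ K) := by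
  refine le_antisymm sup_inf_le fun x hx ↦ ?_
  obtain ⟨a, ha, b, hb, ha₀, hb₀, hab⟩ := (hI.mem_sup_iff hJ).mp hx.1
  obtain ⟨c, hc, d, hd, hc₀, hd₀, hcd⟩ := (hI.mem_sup_iff hK).mp hx.2
  have hbd₀ : 0 ≤ b ⊓ d := le_inf hb₀ hd₀
  have hbd : |b ⊓ d| = b ⊓ d := abs_of_nonneg hbd₀
  refine (hI.mem_sup_iff (hJ.inf hK)).mpr ⟨a + c, add_mem ha hc, b ⊓ d,
    ⟨hJ.mem_of_abs_le hb (hbd.trans_le inf_le_left),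
      hK.mem_of_abs_le hd (hbd.trans_le inf_le_right)⟩, add_nonneg ha₀ hc₀, hbd₀, ?_⟩
  rw [add_inf]
  exact le_inf (hab.trans (add_le_add (le_add_of_nonneg_right hc₀) le_rfl))
    (hcd.trans (add_le_add (le_add_of_nonneg_left ha₀) le_rfl))

theorem sup_biInf {ι : Type*} {J : ι → AddSubgroup G} (hI : IsLIdeal I)
    (hJ : ∀ j, IsLIdeal (J j)) (s : Finset ι) :
    I ⊔ ⨅ j ∈ s, J j = ⨅ j ∈ s, (I ⊔ J j) := by
  classical
  induction s using Finset.induction_on with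
  | empty => simp
  | insert j s _ ih =>
    rw [Finset.iInf_insert, Finset.iInf_insert,
      hI.sup_inf_left (hJ j) (.iInf fun k ↦ .iInf fun _ ↦ hJ k), ih]

theorem lIdealGen_union (hI : IsLIdeal I) (hJ : IsLIdeal J) :
    lIdealGen ((I : Set G) ∪ (J : Set G)) = I ⊔ J :=
  le_antisymm
    (sInf_le ⟨hI.sup hJ, Set.union_subset (le_sup_left (a := I)) (le_sup_right (a := I))⟩)
    (le_sInf fun _ ⟨_, hle⟩ ↦
      sup_le (Set.subset_union_left.trans hle) (Set.subset_union_right.trans hle))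

end IsLIdeal

end LatticeOrderedGroup

/-- **Keimel's Chinese Remainder Theorem for ℓ-groups.** -/
theorem keimel_chinese_remainder {G : Type*} [Lattice G] [AddCommGroup G]
    [CovariantClass G G (· + ·) (· ≤ ·)] {n : ℕ}
    (I : Fin n → AddSubgroup G) (hI : ∀ i, IsLIdeal (I i)) (g : Fin n → G)
    (hcomp : ∀ i j, g i - g j ∈ lIdealGen ((I i : Set G) ∪ (I j : Set G))) :
    ∃ g' : G, ∀ i, g' - g i ∈ I i := by
  have hcomp_sup : ∀ i j, g i - g j ∈ I i ⊔ I j := fun i j ↦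
    (hI i).lIdealGen_union (hI j) ▸ hcomp i j
  obtain ⟨g', hg'⟩ := exists_forall_sub_mem_of_sup_biInf (fun i s ↦ (hI i).sup_biInf hI s)
    hcomp_sup Finset.univ
  exact ⟨g', fun i ↦ hg' i (Finset.mem_univ i)⟩
end

section
/- Let (G, u) be a strongly semisimple unital ℓ-group, let h₁, …, hₙ ∈ G, and let g₁, …, gₙ ∈ G be such that for all i, j ∈ {1, …, n} and every maximal ℓ-ideal m of G with hᵢ ∈ m and hⱼ ∈ m one has gᵢ - gⱼ ∈ m. Then there exists g ∈ G such that for each i ∈ {1, …, n} and each prime ℓ-ideal p of G with hᵢ ∈ p one has g - gᵢ ∈ p. (Strongly Semisimple Patching Lemma: closed co-compact subsets of Spec G are the sets of primes containing a given element hᵢ.) -/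
/-!
By strong semisimplicity, agreement of `g i` and `g j` at the maximal ℓ-ideals containing `h i` and
`h j` says that `g i - g j` lies in the ℓ-ideal generated by `h i` and `h j`, that is,
`|g i - g j| ≤ M • |h i| + M • |h j|`, where one `M` serves all the finitely many pairs. So the
balls `|x - g i| ≤ M • |h i|` are pairwise compatible, and such balls have a common point, namely
the supremum of their lower ends `g i - M • |h i|`. At that point `x`, each `x - g i` lies in every
ℓ-ideal containing `h i`.
-/

section LatticeOrderedGroup

variable {G : Type*} [Lattice G] [AddCommGroup G] [AddLeftMono G]

theorem exists_forall_abs_sub_le {ι : Type*} [Finite ι] (g r : ι → G)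
    (hgr : ∀ i j, |g i - g j| ≤ r i + r j) : ∃ x, ∀ i, |x - g i| ≤ r i := by
  have := Fintype.ofFinite ι
  cases isEmpty_or_nonempty ι with
  | inl _ => exact ⟨0, isEmptyElim⟩
  | inr _ =>
    have lower_le_upper (i j : ι) : g j - r j ≤ r i + g i := by
      have h : g j - g i ≤ r i + r j := (le_abs_self _).trans (add_comm (r i) _ ▸ hgr j i)
      rw [sub_le_iff_le_add] at h ⊢
      exact h.trans_eq (add_right_comm _ _ _)
    let x := Finset.univ.sup' Finset.univ_nonempty fun j => g j - r j
    refine ⟨x, fun i => abs_le'.2 ⟨?_, ?_⟩⟩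
    · exact sub_le_iff_le_add.2 (Finset.sup'_le _ _ fun j _ => lower_le_upper i j)
    · rw [neg_sub, sub_le_comm]
      exact Finset.le_sup' (fun j => g j - r j) (Finset.mem_univ i)

theorem IsLIdeal.abs_mem_s4 {I : AddSubgroup G} (hI : IsLIdeal I) {a : G} (ha : a ∈ I) : |a| ∈ I :=
  hI ha (abs_abs a).le

theorem abs_abs_add_abs (a b : G) : |(|a| + |b|)| = |a| + |b| :=
  abs_of_nonneg (by positivity)

theorem IsLIdeal.abs_add_abs_mem_iff {I : AddSubgroup G} (hI : IsLIdeal I) {a b : G} :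
    |a| + |b| ∈ I ↔ a ∈ I ∧ b ∈ I := by
  refine ⟨fun hab => ?_, fun ⟨ha, hb⟩ => add_mem (hI.abs_mem_s4 ha) (hI.abs_mem_s4 hb)⟩
  have ha : |a| ≤ |(|a| + |b|)| := by
    simpa only [abs_abs_add_abs] using le_add_of_nonneg_right (abs_nonneg b)
  have hb : |b| ≤ |(|a| + |b|)| := by
    simpa only [abs_abs_add_abs] using le_add_of_nonneg_left (abs_nonneg a)
  exact ⟨hI hab ha, hI hab hb⟩

theorem IsLIdeal.mem_of_abs_le_nsmul {I : AddSubgroup G} (hI : IsLIdeal I) {a x : G} {N : ℕ}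
    (ha : a ∈ I) (hx : |x| ≤ N • |a|) : x ∈ I :=
  hI (nsmul_mem (hI.abs_mem_s4 ha) N) (hx.trans (le_abs_self _))

theorem lIdealGen_le {S : Set G} {I : AddSubgroup G} (hI : IsLIdeal I) (hS : S ⊆ I) :
    lIdealGen S ≤ I :=
  sInf_le ⟨hI, hS⟩

/-- The principal ℓ-ideal of `a`, given by explicit bounds: the elements dominated in absolute value
by a multiple of `|a|`. It agrees with `lIdealGen {a}` by `lIdealGen_singleton`. -/
def principalLIdeal (a : G) : AddSubgroup G where
  carrier := {x | ∃ N : ℕ, |x| ≤ N • |a|}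
  zero_mem' := ⟨0, by simp⟩
  add_mem' := by
    rintro x y ⟨N, hx⟩ ⟨M, hy⟩
    exact ⟨N + M, (abs_add_le x y).trans (add_nsmul |a| N M ▸ add_le_add hx hy)⟩
  neg_mem' := by
    rintro x ⟨N, hx⟩
    exact ⟨N, (abs_neg x).trans_le hx⟩

theorem isLIdeal_principalLIdeal (a : G) : IsLIdeal (principalLIdeal a) :=
  fun _ _ ⟨N, hN⟩ hxy => ⟨N, hxy.trans hN⟩

theorem lIdealGen_singleton (a : G) : lIdealGen {a} = principalLIdeal a := by
  refine le_antisymm (lIdealGen_le (isLIdeal_principalLIdeal a) ?_) (le_sInf ?_)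
  · exact Set.singleton_subset_iff.2 ⟨1, (one_nsmul _).ge⟩
  · rintro I ⟨hI, haI⟩ x ⟨N, hN⟩
    exact hI.mem_of_abs_le_nsmul (Set.singleton_subset_iff.1 haI) hN

theorem mem_lIdealGen_singleton {a x : G} : x ∈ lIdealGen {a} ↔ ∃ N : ℕ, |x| ≤ N • |a| := by
  rw [lIdealGen_singleton]
  rfl

theorem lIdealGen_pair (a b : G) : lIdealGen {a, b} = lIdealGen {|a| + |b|} := by
  refine congrArg sInf (Set.ext fun I => and_congr_right fun hI => ?_)
  simp [Set.insert_subset_iff, hI.abs_add_abs_mem_iff]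

theorem mem_lIdealGen_pair {a b x : G} :
    x ∈ lIdealGen {a, b} ↔ ∃ N : ℕ, |x| ≤ N • (|a| + |b|) := by
  rw [lIdealGen_pair, mem_lIdealGen_singleton, abs_abs_add_abs]

/-- A Chinese remainder theorem for principal ℓ-ideals. -/
theorem exists_forall_sub_mem_lIdealGen {ι : Type*} [Finite ι] (h g : ι → G)
    (hg : ∀ i j, g i - g j ∈ lIdealGen {h i, h j}) :
    ∃ x, ∀ i, x - g i ∈ lIdealGen {h i} := by
  choose N hN using fun i j => mem_lIdealGen_pair.1 (hg i j)
  obtain ⟨M, hM⟩ := Finite.exists_le fun p : ι × ι => N p.1 p.2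
  have hgM (i j : ι) : |g i - g j| ≤ M • |h i| + M • |h j| :=
    calc |g i - g j| ≤ N i j • (|h i| + |h j|) := hN i j
      _ ≤ M • (|h i| + |h j|) := nsmul_le_nsmul_left (by positivity) (hM (i, j))
      _ = M • |h i| + M • |h j| := nsmul_add _ _ _
  obtain ⟨x, hx⟩ := exists_forall_abs_sub_le g (fun i => M • |h i|) hgM
  exact ⟨x, fun i => mem_lIdealGen_singleton.2 ⟨M, hx i⟩⟩

theorem IsStronglySemisimple.mem_lIdealGen_pair (hss : IsStronglySemisimple G) {a b x : G}
    (hx : ∀ m : AddSubgroup G, IsMaximalLIdeal m → a ∈ m → b ∈ m → x ∈ m) :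
    x ∈ lIdealGen {a, b} := by
  rw [lIdealGen_pair, ← hss, AddSubgroup.mem_sInf]
  rintro m ⟨hm, hab⟩
  obtain ⟨ha, hb⟩ := hm.1.abs_add_abs_mem_iff.1 hab
  exact hx m hm ha hb

theorem strongly_semisimple_patching_general (hss : IsStronglySemisimple G)
    {ι : Type*} [Finite ι] (h g : ι → G)
    (hcomp : ∀ i j, ∀ m : AddSubgroup G, IsMaximalLIdeal m →
      h i ∈ m → h j ∈ m → g i - g j ∈ m) :
    ∃ x : G, ∀ i, ∀ I : AddSubgroup G, IsLIdeal I → h i ∈ I → x - g i ∈ I := by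
  obtain ⟨x, hx⟩ := exists_forall_sub_mem_lIdealGen h g fun i j =>
    hss.mem_lIdealGen_pair (hcomp i j)
  exact ⟨x, fun i I hI hi => lIdealGen_le hI (Set.singleton_subset_iff.2 hi) (hx i)⟩

end LatticeOrderedGroup

/-- **Strongly Semisimple Patching Lemma**: compatibility on maximal ℓ-ideals
suffices to patch on all primes containing the `h i`. -/
theorem strongly_semisimple_patching {G : Type*} [Lattice G] [AddCommGroup G]
    [CovariantClass G G (· + ·) (· ≤ ·)] (u : G) (hu : IsStrongUnit u)
    (hss : IsStronglySemisimple G) {n : ℕ} (h g : Fin n → G)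
    (hcomp : ∀ i j, ∀ m : AddSubgroup G, IsMaximalLIdeal m →
      h i ∈ m → h j ∈ m → g i - g j ∈ m) :
    ∃ g' : G, ∀ i, ∀ p : AddSubgroup G, IsPrimeLIdeal p → h i ∈ p → g' - g i ∈ p := by
  obtain ⟨x, hx⟩ := strongly_semisimple_patching_general hss h g hcomp
  exact ⟨x, fun i p hp hi => hx i p hp.1 hi⟩
end

section
/- A unital ℓ-group (G, u) is strongly semisimple if and only if for every h ∈ G and every prime ℓ-ideal p of G with h ∈ p, the intersection of all maximal ℓ-ideals of G containing h is contained in p. (Spectral characterisation of strong semisimplicity: every closed co-compact subset K of Spec G satisfies K = cl(K ∩ Max G).) -/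
/-!
The heart of the matter is that an ℓ-ideal is the intersection of the primes above it. An ℓ-ideal
`p` maximal among those missing `g` is prime: suppose `a ⊓ b = 0` and `a ∉ p`. The relative polar of
`b` modulo `p` contains `p` and `a`, so by maximality it contains `g`. Then the relative polar of
`g` modulo `p` contains `p` and `b` but not `g`, so by maximality `b ∈ p`.
-/

theorem add_inf_le_inf_add_inf {G : Type*} [Lattice G] [AddGroup G] [AddLeftMono G]
    [AddRightMono G] {a b c : G} (ha : 0 ≤ a) (hb : 0 ≤ b) (hc : 0 ≤ c) :
    (a + b) ⊓ c ≤ a ⊓ c + b ⊓ c := by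
  rw [inf_add, add_inf, add_inf]
  exact le_inf (le_inf inf_le_left (inf_le_right.trans (le_add_of_nonneg_left ha)))
    (le_inf (inf_le_right.trans (le_add_of_nonneg_right hb))
      (inf_le_right.trans (le_add_of_nonneg_right hc)))

section

variable {G : Type*} [Lattice G] [AddCommGroup G] [CovariantClass G G (· + ·) (· ≤ ·)]

namespace IsLIdeal

variable {I : AddSubgroup G}

theorem abs_mem_iff (hI : IsLIdeal I) {x : G} : |x| ∈ I ↔ x ∈ I :=
  ⟨fun hx => hI hx (abs_abs x).ge, fun hx => hI hx (abs_abs x).le⟩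

theorem mem_of_nonneg_of_le (hI : IsLIdeal I) {x y : G} (hx : 0 ≤ x) (hxy : x ≤ y) (hy : y ∈ I) :
    x ∈ I :=
  hI hy (abs_le_abs_of_nonneg hx hxy)

protected theorem sInf {s : Set (AddSubgroup G)} (hs : ∀ J ∈ s, IsLIdeal J) :
    IsLIdeal (sInf s) := by
  intro x y hy hxy
  rw [AddSubgroup.mem_sInf] at hy ⊢
  exact fun J hJ => hs J hJ (hy J hJ) hxy

theorem sSup_of_directedOn {s : Set (AddSubgroup G)} (hne : s.Nonempty)
    (hdir : DirectedOn (· ≤ ·) s) (hs : ∀ J ∈ s, IsLIdeal J) : IsLIdeal (sSup s) := by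
  intro x y hy hxy
  rw [AddSubgroup.mem_sSup_of_directedOn hne hdir] at hy ⊢
  obtain ⟨J, hJ, hyJ⟩ := hy
  exact ⟨J, hJ, hs J hJ hyJ hxy⟩

/-- The relative polar of `b` modulo the ℓ-ideal `I`: the elements disjoint from `b` in the
quotient `G ⧸ I`, the lattice analogue of an ideal quotient `I : b` in a ring. -/
def relPolar (hI : IsLIdeal I) (b : G) : AddSubgroup G where
  carrier := {x | |x| ⊓ |b| ∈ I}
  zero_mem' := by simp
  add_mem' := by
    intro x y hx hy
    refine hI.mem_of_nonneg_of_le (le_inf (abs_nonneg _) (abs_nonneg b)) ?_ (I.add_mem hx hy)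
    calc |x + y| ⊓ |b| ≤ (|x| + |y|) ⊓ |b| := inf_le_inf_right _ (abs_add_le x y)
      _ ≤ |x| ⊓ |b| + |y| ⊓ |b| :=
        add_inf_le_inf_add_inf (abs_nonneg x) (abs_nonneg y) (abs_nonneg b)
  neg_mem' := by simp

theorem mem_relPolar (hI : IsLIdeal I) {b x : G} : x ∈ hI.relPolar b ↔ |x| ⊓ |b| ∈ I := Iff.rfl

theorem mem_relPolar_comm (hI : IsLIdeal I) {b x : G} :
    x ∈ hI.relPolar b ↔ b ∈ hI.relPolar x := by
  rw [mem_relPolar, mem_relPolar, inf_comm]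

theorem mem_relPolar_self (hI : IsLIdeal I) {b : G} : b ∈ hI.relPolar b ↔ b ∈ I := by
  rw [mem_relPolar, inf_idem, hI.abs_mem_iff]

theorem isLIdeal_relPolar (hI : IsLIdeal I) (b : G) : IsLIdeal (hI.relPolar b) := fun _ _ hy hxy =>
  hI.mem_of_nonneg_of_le (le_inf (abs_nonneg _) (abs_nonneg b)) (inf_le_inf_right _ hxy) hy

theorem le_relPolar (hI : IsLIdeal I) (b : G) : I ≤ hI.relPolar b := fun x hx =>
  hI.mem_of_nonneg_of_le (le_inf (abs_nonneg x) (abs_nonneg b)) inf_le_left (hI.abs_mem_iff.2 hx)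

end IsLIdeal

theorem isPrimeLIdeal_of_maximal_notMem {p : AddSubgroup G} {g : G}
    (hp : Maximal (fun J => IsLIdeal J ∧ g ∉ J) p) : IsPrimeLIdeal p := by
  obtain ⟨hpI, hgp⟩ := hp.prop
  have mem_relPolar_of_notMem {b x : G} (hxp : x ∉ p) (hx : x ∈ hpI.relPolar b) :
      g ∈ hpI.relPolar b := by
    by_contra hg
    exact hxp (hp.le_of_ge ⟨hpI.isLIdeal_relPolar b, hg⟩ (hpI.le_relPolar b) hx)
  refine ⟨hpI, fun htop => hgp (htop ▸ AddSubgroup.mem_top g), fun a b hab => ?_⟩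
  by_contra! ⟨hap, hbp⟩
  have ha_polar : a ∈ hpI.relPolar b := by
    have ha : 0 ≤ a := hab ▸ inf_le_left
    have hb : 0 ≤ b := hab ▸ inf_le_right
    rw [hpI.mem_relPolar, abs_of_nonneg ha, abs_of_nonneg hb, hab]
    exact p.zero_mem
  have hg_polar : g ∈ hpI.relPolar b := mem_relPolar_of_notMem hap ha_polar
  have hg_self : g ∈ hpI.relPolar g :=
    mem_relPolar_of_notMem hbp (hpI.mem_relPolar_comm.1 hg_polar)
  exact hgp (hpI.mem_relPolar_self.1 hg_self)

theorem IsLIdeal.exists_isPrimeLIdeal_notMem {I : AddSubgroup G} (hI : IsLIdeal I) {g : G}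
    (hg : g ∉ I) : ∃ p, IsPrimeLIdeal p ∧ I ≤ p ∧ g ∉ p := by
  obtain ⟨p, hIp, hp⟩ := zorn_le_nonempty₀ {J : AddSubgroup G | IsLIdeal J ∧ g ∉ J}
    (fun c hc hchain J hJ => by
      have hne : c.Nonempty := ⟨J, hJ⟩
      have hdir : DirectedOn (· ≤ ·) c := hchain.directedOn
      refine ⟨sSup c, ⟨.sSup_of_directedOn hne hdir fun K hK => (hc hK).1, ?_⟩,
        fun K hK => le_sSup hK⟩
      rw [AddSubgroup.mem_sSup_of_directedOn hne hdir]
      exact fun ⟨K, hK, hgK⟩ => (hc hK).2 hgK) I ⟨hI, hg⟩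
  exact ⟨p, isPrimeLIdeal_of_maximal_notMem hp, hIp, hp.prop.2⟩

theorem IsLIdeal.eq_sInf_isPrimeLIdeal {I : AddSubgroup G} (hI : IsLIdeal I) :
    I = sInf {p : AddSubgroup G | IsPrimeLIdeal p ∧ I ≤ p} := by
  refine le_antisymm (le_sInf fun p hp => hp.2) fun g hg => ?_
  by_contra hgI
  obtain ⟨p, hp, hIp, hgp⟩ := hI.exists_isPrimeLIdeal_notMem hgI
  exact hgp (AddSubgroup.mem_sInf.1 hg p ⟨hp, hIp⟩)

theorem isLIdeal_lIdealGen (S : Set G) : IsLIdeal (lIdealGen S) :=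
  .sInf fun _ hI => hI.1

theorem lIdealGen_le_iff {S : Set G} {I : AddSubgroup G} (hI : IsLIdeal I) :
    lIdealGen S ≤ I ↔ S ⊆ I :=
  ⟨fun h _ hx => h (AddSubgroup.mem_sInf.2 fun _ hJ => hJ.2 hx), fun h => sInf_le ⟨hI, h⟩⟩

theorem le_lIdealGen_iff_forall_isPrimeLIdeal {S : Set G} {J : AddSubgroup G} :
    J ≤ lIdealGen S ↔ ∀ p : AddSubgroup G, IsPrimeLIdeal p → S ⊆ p → J ≤ p := by
  rw [(isLIdeal_lIdealGen S).eq_sInf_isPrimeLIdeal, le_sInf_iff]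
  constructor
  · exact fun hJ p hp hS => hJ p ⟨hp, (lIdealGen_le_iff hp.1).2 hS⟩
  · exact fun hJ p ⟨hp, hS⟩ => hJ p hp ((lIdealGen_le_iff hp.1).1 hS)

theorem strongly_semisimple_iff_spectral_general :
    IsStronglySemisimple G ↔
      ∀ h : G, ∀ p : AddSubgroup G, IsPrimeLIdeal p → h ∈ p →
        ∀ g : G, (∀ m : AddSubgroup G, IsMaximalLIdeal m → h ∈ m → g ∈ m) → g ∈ p := by
  refine forall_congr' fun h => ?_
  have hle : lIdealGen {h} ≤ sInf {m : AddSubgroup G | IsMaximalLIdeal m ∧ h ∈ m} :=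
    le_sInf fun _ hm => (lIdealGen_le_iff hm.1.1).2 (Set.singleton_subset_iff.2 hm.2)
  rw [← hle.ge_iff_eq', le_lIdealGen_iff_forall_isPrimeLIdeal]
  simp only [Set.singleton_subset_iff, SetLike.mem_coe, SetLike.le_def, AddSubgroup.mem_sInf,
    Set.mem_ofPred_eq, and_imp]

end

/-- **Spectral characterisation of strong semisimplicity**: a unital ℓ-group is
strongly semisimple iff for every `h` and every prime `p` containing `h`, the
intersection of all maximal ℓ-ideals containing `h` is contained in `p`. -/
theorem strongly_semisimple_iff_spectral {G : Type*} [Lattice G] [AddCommGroup G]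
    [CovariantClass G G (· + ·) (· ≤ ·)] (u : G) (hu : IsStrongUnit u) :
    IsStronglySemisimple G ↔
      ∀ h : G, ∀ p : AddSubgroup G, IsPrimeLIdeal p → h ∈ p →
        ∀ g : G, (∀ m : AddSubgroup G, IsMaximalLIdeal m → h ∈ m → g ∈ m) → g ∈ p :=
  strongly_semisimple_iff_spectral_general
end

section
/- Let (G, u) be a unital ℓ-group and let m be a maximal ℓ-ideal of G. Then there exists a unique additive map f : G → ℝ that preserves binary suprema (f(a ⊔ b) = max(f a, f b) for all a, b ∈ G), satisfies f(u) = 1, and has kernel f⁻¹(0) = m. (Hölder's theorem applied to the simple quotient G/m: the unique unital ℓ-embedding of G/m into (ℝ, 1), composed with the quotient map.) -/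
/-!
A maximal ℓ-ideal `m` is prime, so `G ⧸ m` is totally ordered by the image of the positive cone;
maximality also makes it archimedean, because the ℓ-ideal generated by `m` and any `a ∉ m` is all
of `G`. Hölder's embedding of `G ⧸ m` into `ℝ`, normalised at `u`, composed with the quotient map
is the required map.

For uniqueness, `f x ≤ 0` says that `f` kills `x⁺`, so maps with the same kernel are nonpositive at
the same elements. Applied to the elements `d • x - n • u`, this shows that two such maps with value
`1` at `u` give each `x` the same rational upper bounds.
-/

section LatticeOrderedGroup

variable {α : Type*} [Lattice α] [AddGroup α] [AddLeftMono α] [AddRightMono α] {a b c : α}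

theorem inf_add_le_inf_add_inf (ha : 0 ≤ a) (hb : 0 ≤ b) (hc : 0 ≤ c) :
    a ⊓ (b + c) ≤ a ⊓ b + a ⊓ c := by
  rw [inf_add, add_inf, add_inf]
  exact le_inf
    (le_inf (inf_le_left.trans (le_add_of_nonneg_left ha))
      (inf_le_left.trans (le_add_of_nonneg_right hc)))
    (le_inf (inf_le_left.trans (le_add_of_nonneg_left hb)) inf_le_right)

theorem inf_nsmul_eq_zero (hab : a ⊓ b = 0) (n : ℕ) : a ⊓ n • b = 0 := by
  have ha : 0 ≤ a := hab ▸ inf_le_left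
  have hb : 0 ≤ b := hab ▸ inf_le_right
  induction n with
  | zero => rwa [zero_nsmul, inf_eq_right]
  | succ n ih =>
    refine le_antisymm ?_ (le_inf ha (nsmul_nonneg hb _))
    calc a ⊓ (n + 1) • b = a ⊓ (n • b + b) := by rw [succ_nsmul]
      _ ≤ a ⊓ n • b + a ⊓ b := inf_add_le_inf_add_inf ha (nsmul_nonneg hb n) hb
      _ = 0 := by rw [ih, hab, add_zero]

end LatticeOrderedGroup

section LIdeal

variable {G : Type*} [Lattice G] [AddCommGroup G] [AddLeftMono G] {p m : AddSubgroup G}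
  {a g h u : G}

theorem IsLIdeal.abs_mem_s9 (hp : IsLIdeal p) (hg : g ∈ p) : |g| ∈ p :=
  hp hg (abs_abs g).le

theorem IsLIdeal.mem_of_nonneg_of_le_s9 (hp : IsLIdeal p) (hh : h ∈ p) (hg : 0 ≤ g) (hgh : g ≤ h) :
    g ∈ p :=
  hp hh (abs_le_abs_of_nonneg hg hgh)

/-- For an ℓ-ideal `p`, the ℓ-ideal generated by `p` and `a`, given by its explicit description. -/
def lIdealAdjoin (p : AddSubgroup G) (a : G) : AddSubgroup G where
  carrier := {g | ∃ n : ℕ, ∃ h ∈ p, |g| ≤ n • |a| + h}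
  zero_mem' := ⟨0, 0, p.zero_mem, by simp⟩
  add_mem' := by
    rintro x y ⟨n, h, hh, hx⟩ ⟨k, l, hl, hy⟩
    refine ⟨n + k, h + l, p.add_mem hh hl, ?_⟩
    calc |x + y| ≤ |x| + |y| := abs_add_le x y
      _ ≤ (n • |a| + h) + (k • |a| + l) := add_le_add hx hy
      _ = (n + k) • |a| + (h + l) := by rw [add_nsmul, add_add_add_comm]
  neg_mem' := by
    rintro x ⟨n, h, hh, hx⟩
    exact ⟨n, h, hh, by rwa [abs_neg]⟩

theorem isLIdeal_lIdealAdjoin (p : AddSubgroup G) (a : G) : IsLIdeal (lIdealAdjoin p a) := by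
  rintro x y ⟨n, h, hh, hy⟩ hxy
  exact ⟨n, h, hh, hxy.trans hy⟩

theorem IsLIdeal.le_lIdealAdjoin (hp : IsLIdeal p) (a : G) : p ≤ lIdealAdjoin p a :=
  fun x hx => ⟨0, |x|, hp.abs_mem_s9 hx, by simp⟩

theorem self_mem_lIdealAdjoin (p : AddSubgroup G) (a : G) : a ∈ lIdealAdjoin p a :=
  ⟨1, 0, p.zero_mem, by simp⟩

theorem IsMaximalLIdeal.lIdealAdjoin_eq_top (hm : IsMaximalLIdeal m) (ha : a ∉ m) :
    lIdealAdjoin m a = ⊤ := by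
  by_contra h_ne_top
  have h_eq : lIdealAdjoin m a = m :=
    hm.2.2 _ (isLIdeal_lIdealAdjoin m a) h_ne_top (hm.1.le_lIdealAdjoin a)
  exact ha (h_eq ▸ self_mem_lIdealAdjoin m a)

theorem IsMaximalLIdeal.exists_abs_le_nsmul_add (hm : IsMaximalLIdeal m) (ha : 0 ≤ a) (ham : a ∉ m)
    (g : G) : ∃ n : ℕ, ∃ h ∈ m, |g| ≤ n • a + h := by
  have hg : g ∈ lIdealAdjoin m a := hm.lIdealAdjoin_eq_top ham ▸ AddSubgroup.mem_top g
  rwa [← abs_of_nonneg ha]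

theorem IsMaximalLIdeal.isPrimeLIdeal (hm : IsMaximalLIdeal m) : IsPrimeLIdeal m := by
  refine ⟨hm.1, hm.2.1, fun a b hab => or_iff_not_imp_right.2 fun hbm => ?_⟩
  have ha : 0 ≤ a := hab ▸ inf_le_left
  have hb : 0 ≤ b := hab ▸ inf_le_right
  obtain ⟨n, h, hh, hle⟩ := hm.exists_abs_le_nsmul_add hb hbm a
  have ha_le : a ≤ n • b + |h| :=
    (le_abs_self a).trans (hle.trans (add_le_add_right (le_abs_self h) _))
  refine hm.1.mem_of_nonneg_of_le_s9 (hm.1.abs_mem_s9 hh) ha ?_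
  calc a = a ⊓ (n • b + |h|) := (inf_eq_left.2 ha_le).symm
    _ ≤ a ⊓ n • b + a ⊓ |h| := inf_add_le_inf_add_inf ha (nsmul_nonneg hb n) (abs_nonneg h)
    _ = a ⊓ |h| := by rw [inf_nsmul_eq_zero hab, zero_add]
    _ ≤ |h| := inf_le_right

theorem IsStrongUnit.notMem (hu : IsStrongUnit u) (hp : IsLIdeal p) (h_ne_top : p ≠ ⊤) :
    u ∉ p := by
  refine fun hup => h_ne_top (eq_top_iff.2 fun g _ => ?_)
  obtain ⟨n, hn⟩ := hu.2 |g|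
  exact hp (p.nsmul_mem hup n) (hn.trans (le_abs_self _))

/-- The positive cone of the quotient by an ℓ-ideal: the image of the positive cone of `G`. -/
def IsLIdeal.quotientCone (hp : IsLIdeal p) : AddGroupCone (G ⧸ p) where
  toAddSubmonoid := (AddSubmonoid.nonneg G).map (QuotientAddGroup.mk' p)
  eq_zero_of_mem_of_neg_mem' := by
    rintro _ ⟨x, hx, rfl⟩ ⟨y, hy, hxy⟩
    have hxy_mem : x + y ∈ p :=
      (QuotientAddGroup.eq_zero_iff (x + y)).1 (add_eq_zero_iff_neg_eq.2 hxy.symm)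
    exact (QuotientAddGroup.eq_zero_iff x).2
      (hp.mem_of_nonneg_of_le_s9 hxy_mem hx (le_add_of_nonneg_right hy))

theorem IsPrimeLIdeal.hasMemOrNegMem_quotientCone (hp : IsPrimeLIdeal p) :
    HasMemOrNegMem hp.1.quotientCone where
  mem_or_neg_mem q := by
    obtain ⟨x, rfl⟩ := QuotientAddGroup.mk_surjective q
    rcases hp.2.2 x⁺ x⁻ (posPart_inf_negPart_eq_zero x) with hx | hx
    · have h_sub : x⁻ - -x = x⁺ := by
        rw [sub_neg_eq_add, add_comm, ← sub_eq_iff_eq_add.1 (posPart_sub_negPart x)]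
      exact Or.inr ⟨x⁻, negPart_nonneg x, QuotientAddGroup.eq_iff_sub_mem.2 (h_sub ▸ hx)⟩
    · have h_sub : x⁺ - x = x⁻ := sub_eq_of_eq_add' (sub_eq_iff_eq_add.1 (posPart_sub_negPart x))
      exact Or.inl ⟨x⁺, posPart_nonneg x, QuotientAddGroup.eq_iff_sub_mem.2 (h_sub ▸ hx)⟩

end LIdeal

section Quotient

variable {G : Type*} [Lattice G] [AddCommGroup G] [AddLeftMono G] {p m : AddSubgroup G}

/-- The order on `G ⧸ p` whose positive cone is the image of that of `G`. Primality is passed as a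
`Fact` so that the order on the quotient is found by instance search. -/
noncomputable instance IsPrimeLIdeal.quotientLinearOrder [hp : Fact (IsPrimeLIdeal p)] :
    LinearOrder (G ⧸ p) :=
  haveI := hp.out.hasMemOrNegMem_quotientCone
  haveI := Classical.decPred (· ∈ hp.out.1.quotientCone)
  LinearOrder.mkOfAddGroupCone hp.out.1.quotientCone

instance IsPrimeLIdeal.quotient_isOrderedAddMonoid [hp : Fact (IsPrimeLIdeal p)] :
    IsOrderedAddMonoid (G ⧸ p) :=
  IsOrderedAddMonoid.mkOfCone hp.out.1.quotientCone

instance IsMaximalLIdeal.fact_isPrimeLIdeal [hm : Fact (IsMaximalLIdeal m)] :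
    Fact (IsPrimeLIdeal m) :=
  ⟨hm.out.isPrimeLIdeal⟩

theorem quotientMk_mono [Fact (IsPrimeLIdeal p)] : Monotone ((↑) : G → G ⧸ p) :=
  fun x y hxy => ⟨y - x, sub_nonneg.2 hxy, rfl⟩

theorem quotientMk_sup [hp : Fact (IsPrimeLIdeal p)] (a b : G) :
    ((a ⊔ b : G) : G ⧸ p) = max (a : G ⧸ p) (b : G ⧸ p) := by
  refine le_antisymm ?_ (quotientMk_mono.le_map_sup a b)
  have h_disjoint : (a ⊔ b - a) ⊓ (a ⊔ b - b) = 0 := by rw [← sub_sup, sub_self]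
  rcases hp.out.2.2 _ _ h_disjoint with h | h
  · exact le_max_of_le_left (QuotientAddGroup.eq_iff_sub_mem.2 h).le
  · exact le_max_of_le_right (QuotientAddGroup.eq_iff_sub_mem.2 h).le

instance IsMaximalLIdeal.quotient_archimedean [hm : Fact (IsMaximalLIdeal m)] :
    Archimedean (G ⧸ m) where
  arch q r hr := by
    obtain ⟨x, rfl⟩ := QuotientAddGroup.mk_surjective q
    obtain ⟨y, hy, hyr⟩ : r - 0 ∈ hm.out.1.quotientCone := hr.le
    obtain rfl : (y : G ⧸ m) = r := hyr.trans (sub_zero r)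
    have hym : y ∉ m := fun h => hr.ne' ((QuotientAddGroup.eq_zero_iff y).2 h)
    obtain ⟨n, h, hh, hle⟩ := hm.out.exists_abs_le_nsmul_add hy hym x
    refine ⟨n, ?_⟩
    calc (x : G ⧸ m) ≤ (n • y + h : G) := quotientMk_mono ((le_abs_self x).trans hle)
      _ = n • (y : G ⧸ m) := QuotientAddGroup.mk_add_of_mem _ hh

end Quotient

theorem exists_orderAddMonoidHom_real_injective_map_eq_one {M : Type*} [AddCommGroup M]
    [LinearOrder M] [IsOrderedAddMonoid M] [Archimedean M] {e : M} (he : 0 < e) :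
    ∃ f : M →+o ℝ, Function.Injective f ∧ f e = 1 := by
  let _ : One M := ⟨e⟩
  have : ZeroLEOneClass M := ⟨he.le⟩
  have : NeZero (1 : M) := ⟨he.ne'⟩
  exact ⟨Archimedean.embedReal M, Archimedean.embedReal_injective M, Archimedean.embedReal_one⟩

theorem IsMaximalLIdeal.exists_addMonoidHom_real {G : Type*} [Lattice G] [AddCommGroup G]
    [AddLeftMono G] {m : AddSubgroup G} (hm : IsMaximalLIdeal m) {u : G} (hu : 0 ≤ u)
    (hum : u ∉ m) :
    ∃ f : G →+ ℝ, (∀ a b, f (a ⊔ b) = max (f a) (f b)) ∧ f u = 1 ∧ ∀ x, f x = 0 ↔ x ∈ m := by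
  have : Fact (IsMaximalLIdeal m) := ⟨hm⟩
  have hu_pos : 0 < (u : G ⧸ m) :=
    (quotientMk_mono hu).lt_of_ne' (mt (QuotientAddGroup.eq_zero_iff u).1 hum)
  obtain ⟨F, hF_inj, hFu⟩ := exists_orderAddMonoidHom_real_injective_map_eq_one hu_pos
  refine ⟨(F : G ⧸ m →+ ℝ).comp (QuotientAddGroup.mk' m), fun a b => ?_, hFu, fun x => ?_⟩
  · exact (congrArg F (quotientMk_sup a b)).trans (F.monotone'.map_max)
  · exact (map_eq_zero_iff F hF_inj).trans (QuotientAddGroup.eq_zero_iff x)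

theorem map_posPart_eq_zero_iff {G R : Type*} [Lattice G] [AddGroup G] [SemilatticeSup R]
    [AddZeroClass R] {f : G →+ R} (hf : ∀ a b, f (a ⊔ b) = f a ⊔ f b) (x : G) :
    f x⁺ = 0 ↔ f x ≤ 0 := by
  rw [posPart_def, hf, map_zero, sup_eq_right]

section Uniqueness

variable {G K : Type*} [AddGroup G] [Field K] [LinearOrder K] [IsStrictOrderedRing K]
  [Archimedean K] {f g : G →+ K} {u : G}

theorem addMonoidHom_le_of_nonpos_imp_nonpos (hfg : ∀ x, f x ≤ 0 → g x ≤ 0) (hf : f u = 1)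
    (hg : g u = 1) (x : G) : g x ≤ f x := by
  refine le_of_forall_lt_rat_imp_le fun r hr => ?_
  have map_rat_sub {k : G →+ K} (hk : k u = 1) :
      k (r.den • x - r.num • u) = r.den * (k x - r) := by
    have h_num : (r : K) * r.den = r.num := mod_cast Rat.mul_den_eq_num r
    rw [map_sub, map_nsmul, map_zsmul, hk, nsmul_eq_mul, zsmul_eq_mul, ← h_num]
    ring
  have h_den : (0 : K) < r.den := mod_cast r.den_pos
  have hf_nonpos : f (r.den • x - r.num • u) ≤ 0 := by
    rw [map_rat_sub hf]
    exact mul_nonpos_of_nonneg_of_nonpos h_den.le (sub_nonpos.2 hr.le)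
  have hg_nonpos : r.den * (g x - r) ≤ 0 := map_rat_sub hg ▸ hfg _ hf_nonpos
  exact sub_nonpos.1 (nonpos_of_mul_nonpos_right hg_nonpos h_den)

theorem addMonoidHom_eq_of_nonpos_imp_nonpos (hfg : ∀ x, f x ≤ 0 → g x ≤ 0) (hf : f u = 1)
    (hg : g u = 1) : f = g := by
  ext x
  refine le_antisymm ?_ (addMonoidHom_le_of_nonpos_imp_nonpos hfg hf hg x)
  simpa using addMonoidHom_le_of_nonpos_imp_nonpos hfg hf hg (-x)

end Uniqueness

theorem holder_quotient_general {G : Type*} [Lattice G] [AddCommGroup G] [AddLeftMono G] (u : G)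
    (hu : 0 ≤ u) (m : AddSubgroup G) (hm : IsMaximalLIdeal m) (hum : u ∉ m) :
    ∃! f : G → ℝ, (∀ a b : G, f (a + b) = f a + f b) ∧
      (∀ a b : G, f (a ⊔ b) = max (f a) (f b)) ∧ f u = 1 ∧
      (∀ x : G, f x = 0 ↔ x ∈ m) := by
  obtain ⟨f, hf_sup, hfu, hf_ker⟩ := hm.exists_addMonoidHom_real hu hum
  refine ⟨f, ⟨map_add f, hf_sup, hfu, hf_ker⟩, fun g ⟨hg_add, hg_sup, hgu, hg_ker⟩ => ?_⟩
  let g' : G →+ ℝ := AddMonoidHom.mk' g hg_add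
  have h_nonpos (x : G) : g' x ≤ 0 ↔ f x ≤ 0 := by
    rw [← map_posPart_eq_zero_iff hf_sup, ← map_posPart_eq_zero_iff (f := g') hg_sup, hf_ker]
    exact hg_ker x⁺
  have h_eq : g' = f :=
    addMonoidHom_eq_of_nonpos_imp_nonpos (fun x => (h_nonpos x).1) hgu hfu
  exact congrArg DFunLike.coe h_eq

/-- **Hölder's theorem for the simple quotient `G/m`**: for each maximal ℓ-ideal `m`
of a unital ℓ-group `(G, u)` there is a unique additive, sup-preserving map
`G → ℝ` sending `u` to `1` and with kernel exactly `m`. -/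
theorem holder_quotient {G : Type*} [Lattice G] [AddCommGroup G]
    [CovariantClass G G (· + ·) (· ≤ ·)] (u : G) (hu : IsStrongUnit u)
    (m : AddSubgroup G) (hm : IsMaximalLIdeal m) :
    ∃! f : G → ℝ, (∀ a b : G, f (a + b) = f a + f b) ∧
      (∀ a b : G, f (a ⊔ b) = max (f a) (f b)) ∧ f u = 1 ∧
      (∀ x : G, f x = 0 ↔ x ∈ m) :=
  holder_quotient_general u hu.1 m hm (hu.notMem hm.1 hm.2.1)
end

section
/- Let G be a totally ordered abelian group that is Archimedean (for all g, h ∈ G with 0 < g ≤ h there exists m ∈ ℕ with ¬(m • g ≤ h)), and let u ∈ G be a strong order unit with u > 0. Then there exists a unique injective order-preserving additive map f : G → ℝ with f(u) = 1. (Hölder's theorem, unital form.) -/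
/-!
Taking `u` as the distinguished element `1` of `G`, existence is Mathlib's embedding of an
Archimedean group into `ℝ` by rational cuts. For uniqueness, two order-preserving homomorphisms `f`
and `g` cannot give strictly opposite signs to the same element, since that element is comparable
with `0`. If `f u = g u > 0` and `f x < g x`, then for large `n` some multiple `m • f u` lies
strictly between `n • f x` and `n • g x`, and `n • x - m • u` is given opposite signs by `f` and
`g`.
-/

theorem archimedean_of_exists_not_nsmul_le {M : Type*} [AddCommMonoid M] [LinearOrder M]
    (h : ∀ x y : M, 0 < x → x ≤ y → ∃ n : ℕ, ¬ n • x ≤ y) : Archimedean M where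
  arch y x hx := by
    rcases le_total x y with hxy | hyx
    · obtain ⟨n, hn⟩ := h x y hx hxy
      exact ⟨n, (not_le.mp hn).le⟩
    · exact ⟨1, by rwa [one_nsmul]⟩

theorem exists_zsmul_between_nsmul {A : Type*} [AddCommGroup A] [LinearOrder A]
    [IsOrderedAddMonoid A] [Archimedean A] {a b c : A} (hc : 0 < c) (hab : a < b) :
    ∃ (n : ℕ) (m : ℤ), n • a < m • c ∧ m • c < n • b := by
  obtain ⟨n, hn⟩ := exists_lt_nsmul (sub_pos.mpr hab) c
  obtain ⟨m, ⟨hlt, hle⟩, -⟩ := existsUnique_add_zsmul_mem_Ioc hc 0 (n • a)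
  rw [zero_add] at hlt hle
  refine ⟨n, m, hlt, ?_⟩
  calc
    m • c ≤ n • a + c := hle
    _ < n • a + n • (b - a) := by gcongr
    _ = n • b := by rw [← nsmul_add, add_sub_cancel]

theorem apply_nonpos_of_apply_neg {M A B : Type*} [AddZeroClass M] [LinearOrder M]
    [AddZeroClass A] [Preorder A] [AddZeroClass B] [Preorder B]
    (f : M →+o A) (g : M →+o B) {x : M} (hx : f x < 0) : g x ≤ 0 := by
  have hx_neg : x < 0 := f.monotone'.reflect_lt (hx.trans_eq (map_zero f).symm)
  exact (g.monotone' hx_neg.le).trans_eq (map_zero g)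

section Uniqueness

variable {G A : Type*} [AddGroup G] [LinearOrder G] [AddCommGroup A] [LinearOrder A]
  [IsOrderedAddMonoid A] [Archimedean A] {f g : G →+o A} {u : G}

theorem apply_le_apply_of_apply_eq_of_pos (hfu : 0 < f u) (hfg : f u = g u) (x : G) :
    g x ≤ f x := by
  by_contra! hlt
  obtain ⟨n, m, hf, hg⟩ := exists_zsmul_between_nsmul hfu hlt
  have hf_neg : f (n • x - m • u) < 0 := by
    rwa [map_sub, map_nsmul, map_zsmul, sub_neg]
  have hg_pos : 0 < g (n • x - m • u) := by
    rwa [map_sub, map_nsmul, map_zsmul, ← hfg, sub_pos]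
  exact hg_pos.not_ge (apply_nonpos_of_apply_neg f g hf_neg)

theorem orderAddMonoidHom_eq_of_apply_eq_of_pos (hfu : 0 < f u) (hfg : f u = g u) : f = g :=
  OrderAddMonoidHom.ext fun x =>
    le_antisymm (apply_le_apply_of_apply_eq_of_pos (hfg ▸ hfu) hfg.symm x)
      (apply_le_apply_of_apply_eq_of_pos hfu hfg x)

end Uniqueness

theorem exists_injective_orderAddMonoidHom_real_apply_eq_one {G : Type*} [AddCommGroup G]
    [LinearOrder G] [IsOrderedAddMonoid G] [Archimedean G] {u : G} (hu : 0 < u) :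
    ∃ f : G →+o ℝ, Function.Injective f ∧ f u = 1 := by
  let : One G := ⟨u⟩
  have : ZeroLEOneClass G := ⟨hu.le⟩
  have : NeZero (1 : G) := ⟨hu.ne'⟩
  exact ⟨Archimedean.embedReal G, Archimedean.embedReal_injective G, Archimedean.embedReal_one⟩

/-- **Hölder's theorem (unital form)**: an Archimedean totally ordered abelian group
with a positive strong order unit `u` admits a unique injective order-preserving
additive map into `ℝ` sending `u` to `1`. -/
theorem holder_theorem {G : Type*} [LinearOrder G] [AddCommGroup G]
    [CovariantClass G G (· + ·) (· ≤ ·)]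
    (harch : ∀ g h : G, 0 < g → g ≤ h → ∃ m : ℕ, ¬ (m • g ≤ h))
    (u : G) (hu : 0 < u) (hunit : ∀ g : G, ∃ n : ℕ, g ≤ n • u) :
    ∃! f : G → ℝ, Function.Injective f ∧ Monotone f ∧
      (∀ a b : G, f (a + b) = f a + f b) ∧ f u = 1 := by
  have : IsOrderedAddMonoid G := { add_le_add_left := fun _ _ hab c => add_le_add_left hab c }
  have : Archimedean G := archimedean_of_exists_not_nsmul_le harch
  obtain ⟨f, hf_inj, hfu⟩ := exists_injective_orderAddMonoidHom_real_apply_eq_one hu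
  refine ⟨f, ⟨hf_inj, f.monotone', map_add f, hfu⟩, ?_⟩
  rintro g ⟨-, hg_mono, hg_add, hgu⟩
  let g' : G →+o ℝ := ⟨AddMonoidHom.mk' g hg_add, hg_mono⟩
  have hfg : f = g' :=
    orderAddMonoidHom_eq_of_apply_eq_of_pos (hfu ▸ one_pos) (hfu.trans hgu.symm)
  exact congrArg DFunLike.coe hfg.symm
end
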